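/- With the Lévy–Khintchine data (μ, c, K), κ as defined, and Λ(λ) := κ(λ,1)/(κ(λ,2) − 2κ(λ,1)), the function λ ↦ Λ(λ) is twice continuously differentiable on [0,1], and with m := (μ + ½σ²)/σ², s₃ := (∫x³K(dx))/σ³ and s₄ := (∫x⁴K(dx))/σ⁴ one has: Λ(0) = m, Λ'(0) = s₃·σ·(1/6 − m), and Λ''(0) = s₃²·σ²·(2m − 1/3) + (1/6)·s₄·σ²·(1/2 − 7m). -/

import Mathlib

open MeasureTheory Complex Set

/-- Cumulant generating function `κ(λ, z)` of the interpolating family. -/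
noncomputable def kappa (μ c : ℝ) (K : Measure ℝ) (lam : ℝ) (z : ℂ) : ℂ :=
  if lam = 0 then (μ : ℂ) * z + (((c + ∫ x : ℝ, x ^ 2 ∂K) : ℝ) : ℂ) / 2 * z ^ 2
  else (μ : ℂ) * z + (c : ℂ) / 2 * z ^ 2 +
    ((lam : ℂ) ^ 2)⁻¹ *
      ∫ x : ℝ, (Complex.exp ((lam : ℂ) * z * (x : ℂ)) - 1 - (lam : ℂ) * z * (x : ℂ)) ∂K

noncomputable def kbar (μ c : ℝ) (K : Measure ℝ) (lam : ℝ) (y z : ℂ) : ℂ :=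
  kappa μ c K lam (y + z) - kappa μ c K lam y - kappa μ c K lam z

noncomputable def gamLK (μ c : ℝ) (K : Measure ℝ) (lam : ℝ) (z : ℂ) : ℂ :=
  kbar μ c K lam z 1 / kbar μ c K lam 1 1

noncomputable def etaLK (μ c : ℝ) (K : Measure ℝ) (lam : ℝ) (z : ℂ) : ℂ :=
  kappa μ c K lam z - kappa μ c K lam 1 * gamLK μ c K lam z

/-- The mean-variance ratio `Λ(λ) = κ(λ,1) / (κ(λ,2) − 2κ(λ,1))`. -/
noncomputable def LamMV (μ c : ℝ) (K : Measure ℝ) (lam : ℝ) : ℂ :=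
  kappa μ c K lam 1 / (kappa μ c K lam 2 - 2 * kappa μ c K lam 1)

/-!
Let `ν = c δ₀ + x² K(dx)` be the Kolmogorov canonical measure. Writing
`eᵘ - 1 - u = u² ∫₀¹ (1 - t) eᵗᵘ dt` and `(eᵘ - 1)² = u² ∫₀¹ ∫₀¹ e⁽ˢ⁺ᵗ⁾ᵘ ds dt` turns the numerator
and the denominator of `Λ` into

* `κ(λ, 1) = μ + N(λ)`, where `N` is the mgf of `ν` mixed over the random scale `(1 - t) dt`;
* `κ(λ, 2) - 2 κ(λ, 1) = D(λ)`, where `D` is the mgf of `ν` mixed over the sum of two independent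
  uniform scales.

Mgfs are positive, are analytic inside their domain and have the moments as derivatives at `0`.
Since moments of a mixture are products of moments, `N⁽ⁿ⁾(0)` and `D⁽ⁿ⁾(0)` are explicit multiples
of `∫ xⁿ dν`, and Leibniz' rule for `Λ D = μ + N` gives the derivatives of `Λ`.
-/

open ProbabilityTheory
open scoped Topology

lemma iteratedDeriv_two_div {𝕜 : Type*} [NontriviallyNormedField 𝕜] {f g : 𝕜 → 𝕜} {x : 𝕜}
    (hf : ContDiffAt 𝕜 2 f x) (hg : ContDiffAt 𝕜 2 g x) (hx : g x ≠ 0) :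
    iteratedDeriv 2 (fun y ↦ f y / g y) x =
      (iteratedDeriv 2 f x - 2 * deriv (fun y ↦ f y / g y) x * deriv g x -
        f x / g x * iteratedDeriv 2 g x) / g x := by
  have hfg : (fun y ↦ f y / g y) * g =ᶠ[𝓝 x] f := by
    filter_upwards [hg.continuousAt.eventually_ne hx] with y hy
    exact div_mul_cancel₀ _ hy
  have leibniz := hfg.iteratedDeriv_eq 2
  rw [iteratedDeriv_mul (f := fun y ↦ f y / g y) (hf.div hg hx) hg] at leibniz
  simp only [Finset.sum_range_succ, Finset.sum_range_zero, Nat.choose_zero_right,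
    Nat.choose_one_right, Nat.choose_self, Nat.sub_zero, Nat.sub_self, Nat.reduceSub,
    iteratedDeriv_zero, iteratedDeriv_one, Nat.cast_one, Nat.cast_ofNat, one_mul, zero_add]
    at leibniz
  rw [← leibniz]
  field_simp
  ring

lemma iteratedDerivWithin_ofReal_comp {f : ℝ → ℝ} {s : Set ℝ} {x : ℝ} {n : ℕ}
    (hf : ContDiffWithinAt ℝ n f s x) (hs : UniqueDiffOn ℝ s) (hx : x ∈ s) :
    iteratedDerivWithin n (fun y ↦ (f y : ℂ)) s x =
      ((iteratedDerivWithin n f s x : ℝ) : ℂ) := by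
  simp only [iteratedDerivWithin]
  exact congr($(ofRealCLM.iteratedFDerivWithin_comp_left hf hs hx le_rfl) fun _ ↦ 1)

lemma isFiniteMeasure_of_zero_mem_integrableExpSet {Ω : Type*} {mΩ : MeasurableSpace Ω}
    {X : Ω → ℝ} {ρ : Measure Ω} (h : 0 ∈ integrableExpSet X ρ) : IsFiniteMeasure ρ :=
  (integrable_const_iff_isFiniteMeasure (one_ne_zero (α := ℝ))).1
    (by simpa [integrableExpSet] using h)

section ScaleMixture

variable {Ω : Type*} {mΩ : MeasurableSpace Ω} {T : Ω → ℝ} {ρ : Measure Ω} {ν : Measure ℝ} {r s : ℝ}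

/-- The mgf of the scale mixture `T * X` of `ν`: `X` has law `ν`, and the random scale `T` is drawn
independently under `ρ`. Neither measure is normalised. -/
noncomputable def mixtureMGF (T : Ω → ℝ) (ρ : Measure Ω) (ν : Measure ℝ) : ℝ → ℝ :=
  mgf (fun p : Ω × ℝ ↦ T p.1 * p.2) (ρ.prod ν)

lemma exp_mul_le_one_add_exp_mul {t u : ℝ} (ht : t ∈ Icc 0 r) :
    Real.exp (t * u) ≤ 1 + Real.exp (r * u) := by
  rcases le_total u 0 with hu | hu
  · have : Real.exp (t * u) ≤ 1 := Real.exp_le_one_iff.2 (mul_nonpos_of_nonneg_of_nonpos ht.1 hu)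
    linarith [Real.exp_pos (r * u)]
  · have : Real.exp (t * u) ≤ Real.exp (r * u) := by gcongr; exact ht.2
    linarith

lemma mem_integrableExpSet_mul_prod [IsFiniteMeasure ρ] [IsFiniteMeasure ν] (hT : AEMeasurable T ρ)
    (hTr : ∀ᵐ ω ∂ρ, T ω ∈ Icc 0 r) (hs : r * s ∈ integrableExpSet id ν) :
    s ∈ integrableExpSet (fun p : Ω × ℝ ↦ T p.1 * p.2) (ρ.prod ν) := by
  have hdom : Integrable (fun p : Ω × ℝ ↦ 1 + Real.exp (r * s * p.2)) (ρ.prod ν) :=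
    (integrable_const 1).add (Integrable.comp_snd hs ρ)
  refine hdom.mono' ?_ ?_
  · exact ((hT.comp_fst.mul measurable_snd.aemeasurable).const_mul s).exp.aestronglyMeasurable
  · filter_upwards [Measure.quasiMeasurePreserving_fst.ae hTr] with p hp
    rw [Real.norm_eq_abs, Real.abs_exp, mul_left_comm, mul_assoc r]
    exact exp_mul_le_one_add_exp_mul hp

lemma mem_interior_integrableExpSet_mul_prod [IsFiniteMeasure ρ] [IsFiniteMeasure ν]
    (hT : AEMeasurable T ρ) (hTr : ∀ᵐ ω ∂ρ, T ω ∈ Icc 0 r)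
    (hs : r * s ∈ interior (integrableExpSet id ν)) :
    s ∈ interior (integrableExpSet (fun p : Ω × ℝ ↦ T p.1 * p.2) (ρ.prod ν)) :=
  interior_mono (fun _ ↦ mem_integrableExpSet_mul_prod hT hTr)
    (preimage_interior_subset_interior_preimage (continuous_const_mul r) hs)

lemma mixtureMGF_eq_integral_mgf [SFinite ρ] [SFinite ν]
    (hs : s ∈ integrableExpSet (fun p : Ω × ℝ ↦ T p.1 * p.2) (ρ.prod ν)) :
    mixtureMGF T ρ ν s = ∫ x, mgf T ρ (s * x) ∂ν := by
  rw [mixtureMGF, mgf, integral_prod_symm _ hs]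
  simp only [mgf, mul_left_comm, mul_comm]

lemma mixtureMGF_pos [SFinite ρ] [SFinite ν] [NeZero ρ] [NeZero ν]
    (hs : s ∈ integrableExpSet (fun p : Ω × ℝ ↦ T p.1 * p.2) (ρ.prod ν)) :
    0 < mixtureMGF T ρ ν s := by
  refine mgf_pos' ?_ hs
  rw [← Measure.measure_univ_ne_zero, ← univ_prod_univ, Measure.prod_prod]
  exact mul_ne_zero (NeZero.ne _) (NeZero.ne _)

lemma integrable_mgf_mul [SFinite ρ] [SFinite ν]
    (hs : s ∈ integrableExpSet (fun p : Ω × ℝ ↦ T p.1 * p.2) (ρ.prod ν)) :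
    Integrable (fun x ↦ mgf T ρ (s * x)) ν := by
  refine (Integrable.integral_prod_right hs).congr (.of_forall fun x ↦ ?_)
  simp only [mgf, mul_left_comm, mul_comm]

lemma iteratedDeriv_mixtureMGF_zero [SFinite ρ] [SFinite ν]
    (h : 0 ∈ interior (integrableExpSet (fun p : Ω × ℝ ↦ T p.1 * p.2) (ρ.prod ν))) (n : ℕ) :
    iteratedDeriv n (mixtureMGF T ρ ν) 0 = moment T n ρ * moment id n ν := by
  rw [mixtureMGF, iteratedDeriv_mgf_zero h]
  simp only [Pi.pow_apply, mul_pow, moment, id]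
  exact integral_prod_mul (fun ω ↦ T ω ^ n) (fun x ↦ x ^ n)

end ScaleMixture

section Weights

/-- The kernel `(1 - t) dt` on `[0, 1]` of the integral form of the second order Taylor remainder,
so that its mgf is `(exp u - 1 - u) / u ^ 2`. -/
noncomputable def taylorWeight : Measure ℝ :=
  (volume.restrict (Icc 0 1)).withDensity fun t ↦ ENNReal.ofReal (1 - t)

/-- The uniform law on `[0, 1] ^ 2`. The mgf of the sum of its coordinates is
`((exp u - 1) / u) ^ 2`. -/
noncomputable def unitSquare : Measure (ℝ × ℝ) :=
  (volume.restrict (Icc 0 1)).prod (volume.restrict (Icc 0 1))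

lemma integral_taylorWeight (f : ℝ → ℝ) :
    ∫ t, f t ∂taylorWeight = ∫ t in (0 : ℝ)..1, (1 - t) * f t := by
  rw [taylorWeight, integral_withDensity_eq_integral_toReal_smul (by fun_prop) (by simp),
    intervalIntegral.integral_of_le zero_le_one, ← integral_Icc_eq_integral_Ioc]
  refine setIntegral_congr_fun measurableSet_Icc fun t ht ↦ ?_
  simp only [smul_eq_mul, ENNReal.toReal_ofReal (sub_nonneg.2 ht.2)]

instance : IsFiniteMeasure taylorWeight := by
  refine isFiniteMeasure_withDensity_ofReal ?_
  exact ((by fun_prop : Continuous fun t : ℝ ↦ 1 - t).integrableOn_Icc).2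

instance : IsProbabilityMeasure unitSquare :=
  ⟨by simp [unitSquare, ← Set.univ_prod_univ, Measure.prod_prod]⟩

lemma ae_taylorWeight_mem_Icc : ∀ᵐ t ∂taylorWeight, t ∈ Icc (0 : ℝ) 1 :=
  (withDensity_absolutelyContinuous _ _).ae_le (ae_restrict_mem measurableSet_Icc)

lemma ae_unitSquare_add_mem_Icc : ∀ᵐ p ∂unitSquare, p.1 + p.2 ∈ Icc (0 : ℝ) 2 := by
  have hI : ∀ᵐ t ∂(volume : Measure ℝ).restrict (Icc 0 1), t ∈ Icc (0 : ℝ) 1 :=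
    ae_restrict_mem measurableSet_Icc
  filter_upwards [Measure.quasiMeasurePreserving_fst.ae hI,
    Measure.quasiMeasurePreserving_snd.ae hI] with p h₁ h₂
  exact ⟨add_nonneg h₁.1 h₂.1, by linarith [h₁.2, h₂.2]⟩

lemma moment_taylorWeight (n : ℕ) : moment id n taylorWeight = 1 / ((n + 1) * (n + 2)) := by
  have expand (t : ℝ) : (1 - t) * t ^ n = t ^ n - t ^ (n + 1) := by ring
  simp only [moment, Pi.pow_apply, id, integral_taylorWeight, expand]
  rw [intervalIntegral.integral_sub (by simp) (by simp), integral_pow, integral_pow]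
  push_cast
  simp only [one_pow, ne_eq, Nat.add_eq_zero_iff, one_ne_zero, and_false,
    not_false_eq_true, zero_pow]
  field_simp
  ring

lemma integral_unitSquare {f : ℝ × ℝ → ℝ} (hf : Continuous f) :
    ∫ p, f p ∂unitSquare = ∫ u in (0 : ℝ)..1, ∫ v in (0 : ℝ)..1, f (u, v) := by
  have hint : Integrable f unitSquare := by
    rw [unitSquare, Measure.prod_restrict, Icc_prod_Icc]
    exact hf.integrableOn_Icc
  simp only [unitSquare, intervalIntegral.integral_of_le zero_le_one,
    ← integral_Icc_eq_integral_Ioc]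
  exact integral_prod f hint

lemma moment_add_unitSquare (n : ℕ) :
    moment (fun p ↦ p.1 + p.2) n unitSquare = 2 * (2 ^ (n + 1) - 1) / ((n + 1) * (n + 2)) := by
  have inner (u : ℝ) : ∫ v in (0 : ℝ)..1, (u + v) ^ n =
      ((u + 1) ^ (n + 1) - u ^ (n + 1)) / (n + 1) := by
    rw [intervalIntegral.integral_comp_add_left (fun w ↦ w ^ n), integral_pow, add_zero]
  have shifted : ∫ u in (0 : ℝ)..1, (u + 1) ^ (n + 1) = (2 ^ (n + 2) - 1) / (n + 2) := by
    rw [intervalIntegral.integral_comp_add_right (fun w ↦ w ^ (n + 1)), integral_pow]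
    norm_num [add_assoc]
  have unshifted : ∫ u in (0 : ℝ)..1, u ^ (n + 1) = 1 / ((n : ℝ) + 2) := by
    rw [integral_pow]
    norm_num [add_assoc]
  simp only [moment, Pi.pow_apply]
  rw [integral_unitSquare (by fun_prop)]
  simp only [inner]
  rw [intervalIntegral.integral_div, intervalIntegral.integral_sub
    ((by fun_prop : Continuous _).intervalIntegrable _ _) (by simp), shifted, unshifted]
  field_simp
  ring

lemma mgf_taylorWeight_zero : mgf id taylorWeight 0 = 1 / 2 := by
  simpa [mgf, moment] using moment_taylorWeight 0

lemma sq_mul_mgf_taylorWeight (u : ℝ) :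
    u ^ 2 * mgf id taylorWeight u = Real.exp u - 1 - u := by
  have antideriv (t : ℝ) : HasDerivAt (fun t ↦ (u * (1 - t) + 1) * Real.exp (u * t))
      (u ^ 2 * ((1 - t) * Real.exp (u * t))) t := by
    have hexp : HasDerivAt (fun t ↦ Real.exp (u * t)) (Real.exp (u * t) * u) t := by
      simpa using ((hasDerivAt_id t).const_mul u).exp
    have hlin : HasDerivAt (fun t ↦ u * (1 - t) + 1) (-u) t := by
      simpa using (((hasDerivAt_id t).const_sub 1).const_mul u).add_const 1
    exact (hlin.mul hexp).congr_deriv (by ring)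
  simp only [mgf, id, integral_taylorWeight]
  rw [← intervalIntegral.integral_const_mul, intervalIntegral.integral_eq_sub_of_hasDerivAt
    (fun t _ ↦ antideriv t) ((by fun_prop : Continuous _).intervalIntegrable _ _)]
  simp only [sub_self, mul_zero, zero_add, mul_one, one_mul, sub_zero, Real.exp_zero]
  ring

lemma sq_mul_mgf_add_unitSquare (u : ℝ) :
    u ^ 2 * mgf (fun p ↦ p.1 + p.2) unitSquare u = (Real.exp u - 1) ^ 2 := by
  have single : u * ∫ t in (0 : ℝ)..1, Real.exp (u * t) = Real.exp u - 1 := by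
    rw [intervalIntegral.mul_integral_comp_mul_left, integral_exp, mul_zero, mul_one, Real.exp_zero]
  simp only [mgf]
  rw [integral_unitSquare (by fun_prop), ← single]
  simp only [mul_add, Real.exp_add, intervalIntegral.integral_const_mul,
    intervalIntegral.integral_mul_const]
  ring

lemma mgf_add_unitSquare (u : ℝ) : mgf (fun p ↦ p.1 + p.2) unitSquare u =
    4 * mgf id taylorWeight (2 * u) - 2 * mgf id taylorWeight u := by
  rcases eq_or_ne u 0 with rfl | hu
  · rw [mul_zero, mgf_taylorWeight_zero, mgf_zero]
    norm_num
  · have hdouble : Real.exp (2 * u) = Real.exp u ^ 2 := by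
      rw [two_mul, Real.exp_add, sq]
    have h2 := sq_mul_mgf_taylorWeight (2 * u)
    rw [hdouble] at h2
    refine mul_left_cancel₀ (pow_ne_zero 2 hu) ?_
    linear_combination sq_mul_mgf_add_unitSquare u - h2 + 2 * sq_mul_mgf_taylorWeight u

end Weights

section Transforms

variable {ν : Measure ℝ} {s : ℝ}

/-- The transform `s ↦ ∫ (exp (s * x) - 1 - s * x) / (s * x) ^ 2 ∂ν`, with the quotient extended
continuously by `1 / 2` at `s * x = 0`. -/
noncomputable def taylorTransform (ν : Measure ℝ) : ℝ → ℝ :=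
  mixtureMGF id taylorWeight ν

/-- The transform `s ↦ ∫ ((exp (s * x) - 1) / (s * x)) ^ 2 ∂ν`, with the quotient extended
continuously by `1` at `s * x = 0`. -/
noncomputable def squareTransform (ν : Measure ℝ) : ℝ → ℝ :=
  mixtureMGF (fun p : ℝ × ℝ ↦ p.1 + p.2) unitSquare ν

variable [IsFiniteMeasure ν]

lemma mem_integrableExpSet_taylorWeight (hs : s ∈ integrableExpSet id ν) :
    s ∈ integrableExpSet (fun p : ℝ × ℝ ↦ id p.1 * p.2) (taylorWeight.prod ν) :=
  mem_integrableExpSet_mul_prod aemeasurable_id ae_taylorWeight_mem_Icc (by rwa [one_mul])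

lemma mem_interior_integrableExpSet_taylorWeight (hs : s ∈ interior (integrableExpSet id ν)) :
    s ∈ interior (integrableExpSet (fun p : ℝ × ℝ ↦ id p.1 * p.2) (taylorWeight.prod ν)) :=
  mem_interior_integrableExpSet_mul_prod aemeasurable_id ae_taylorWeight_mem_Icc
    (by rwa [one_mul])

lemma taylorTransform_eq_integral (hs : s ∈ integrableExpSet id ν) :
    taylorTransform ν s = ∫ x, mgf id taylorWeight (s * x) ∂ν :=
  mixtureMGF_eq_integral_mgf (mem_integrableExpSet_taylorWeight hs)

lemma integrable_mgf_taylorWeight_mul (hs : s ∈ integrableExpSet id ν) :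
    Integrable (fun x ↦ mgf id taylorWeight (s * x)) ν :=
  integrable_mgf_mul (mem_integrableExpSet_taylorWeight hs)

lemma mem_integrableExpSet_unitSquare (h2s : 2 * s ∈ integrableExpSet id ν) :
    s ∈ integrableExpSet (fun p : (ℝ × ℝ) × ℝ ↦ (p.1.1 + p.1.2) * p.2) (unitSquare.prod ν) :=
  mem_integrableExpSet_mul_prod (T := fun p : ℝ × ℝ ↦ p.1 + p.2) (by fun_prop)
    ae_unitSquare_add_mem_Icc h2s

lemma mem_interior_integrableExpSet_unitSquare
    (h2s : 2 * s ∈ interior (integrableExpSet id ν)) :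
    s ∈ interior (integrableExpSet (fun p : (ℝ × ℝ) × ℝ ↦ (p.1.1 + p.1.2) * p.2)
      (unitSquare.prod ν)) :=
  mem_interior_integrableExpSet_mul_prod (T := fun p : ℝ × ℝ ↦ p.1 + p.2) (by fun_prop)
    ae_unitSquare_add_mem_Icc h2s

lemma squareTransform_eq (hs : s ∈ integrableExpSet id ν) (h2s : 2 * s ∈ integrableExpSet id ν) :
    squareTransform ν s = 4 * taylorTransform ν (2 * s) - 2 * taylorTransform ν s := by
  rw [squareTransform, mixtureMGF_eq_integral_mgf (mem_integrableExpSet_unitSquare h2s),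
    taylorTransform_eq_integral hs, taylorTransform_eq_integral h2s]
  simp only [mgf_add_unitSquare, ← mul_assoc]
  rw [integral_sub ((integrable_mgf_taylorWeight_mul h2s).const_mul 4)
    ((integrable_mgf_taylorWeight_mul hs).const_mul 2), integral_const_mul, integral_const_mul]

lemma squareTransform_pos [NeZero ν] (h2s : 2 * s ∈ integrableExpSet id ν) :
    0 < squareTransform ν s :=
  mixtureMGF_pos (mem_integrableExpSet_unitSquare h2s)

lemma analyticAt_taylorTransform (hs : s ∈ interior (integrableExpSet id ν)) :
    AnalyticAt ℝ (taylorTransform ν) s :=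
  analyticAt_mgf (mem_interior_integrableExpSet_taylorWeight hs)

lemma analyticAt_squareTransform (h2s : 2 * s ∈ interior (integrableExpSet id ν)) :
    AnalyticAt ℝ (squareTransform ν) s :=
  analyticAt_mgf (X := fun p : (ℝ × ℝ) × ℝ ↦ (p.1.1 + p.1.2) * p.2)
    (mem_interior_integrableExpSet_unitSquare h2s)

lemma iteratedDeriv_taylorTransform_zero (h0 : 0 ∈ interior (integrableExpSet id ν)) (n : ℕ) :
    iteratedDeriv n (taylorTransform ν) 0 = moment id n ν / ((n + 1) * (n + 2)) := by
  rw [taylorTransform, iteratedDeriv_mixtureMGF_zero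
    (mem_interior_integrableExpSet_taylorWeight h0), moment_taylorWeight, one_div_mul_eq_div]

lemma iteratedDeriv_squareTransform_zero (h0 : 0 ∈ interior (integrableExpSet id ν)) (n : ℕ) :
    iteratedDeriv n (squareTransform ν) 0 =
      2 * (2 ^ (n + 1) - 1) / ((n + 1) * (n + 2)) * moment id n ν := by
  rw [squareTransform, iteratedDeriv_mixtureMGF_zero (T := fun p : ℝ × ℝ ↦ p.1 + p.2)
    (mem_interior_integrableExpSet_unitSquare (by simpa)), moment_add_unitSquare]

lemma squareTransform_zero (h0 : 0 ∈ interior (integrableExpSet id ν)) :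
    squareTransform ν 0 = moment id 0 ν := by
  rw [← iteratedDeriv_zero (f := squareTransform ν), iteratedDeriv_squareTransform_zero h0]
  norm_num

lemma deriv_squareTransform_zero (h0 : 0 ∈ interior (integrableExpSet id ν)) :
    deriv (squareTransform ν) 0 = moment id 1 ν := by
  rw [← iteratedDeriv_one, iteratedDeriv_squareTransform_zero h0]
  norm_num

end Transforms

section MeanVarianceRatio

/-- The real form of the mean-variance ratio `Λ` for drift `μ`, as a function of the Kolmogorov
canonical measure `ν`. -/
noncomputable def meanVarianceRatio (μ : ℝ) (ν : Measure ℝ) (s : ℝ) : ℝ :=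
  (μ + taylorTransform ν s) / squareTransform ν s

variable (μ : ℝ) {ν : Measure ℝ} [IsFiniteMeasure ν] {s : ℝ}

lemma analyticAt_meanVarianceRatio [NeZero ν] (hs : s ∈ interior (integrableExpSet id ν))
    (h2s : 2 * s ∈ interior (integrableExpSet id ν)) :
    AnalyticAt ℝ (meanVarianceRatio μ ν) s :=
  (analyticAt_const.add (analyticAt_taylorTransform hs)).div (analyticAt_squareTransform h2s)
    (squareTransform_pos (interior_subset h2s)).ne'

lemma analyticOnNhd_meanVarianceRatio [NeZero ν]
    (h : Icc 0 2 ⊆ interior (integrableExpSet id ν)) :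
    AnalyticOnNhd ℝ (meanVarianceRatio μ ν) (Icc 0 1) := fun _ hs ↦
  analyticAt_meanVarianceRatio μ (h ⟨hs.1, by linarith [hs.2]⟩)
    (h ⟨by linarith [hs.1], by linarith [hs.2]⟩)

lemma meanVarianceRatio_zero (h0 : 0 ∈ interior (integrableExpSet id ν)) :
    meanVarianceRatio μ ν 0 = (μ + moment id 0 ν / 2) / moment id 0 ν := by
  have hN : taylorTransform ν 0 = moment id 0 ν / 2 := by
    rw [← iteratedDeriv_zero (f := taylorTransform ν), iteratedDeriv_taylorTransform_zero h0]
    norm_num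
  rw [meanVarianceRatio, hN, squareTransform_zero h0]

lemma deriv_meanVarianceRatio_zero [NeZero ν] (h0 : 0 ∈ interior (integrableExpSet id ν)) :
    deriv (meanVarianceRatio μ ν) 0 =
      moment id 1 ν / moment id 0 ν * (1 / 6 - meanVarianceRatio μ ν 0) := by
  have h20 : 2 * 0 ∈ interior (integrableExpSet id ν) := by simpa
  have hN : deriv (taylorTransform ν) 0 = moment id 1 ν / 6 := by
    rw [← iteratedDeriv_one, iteratedDeriv_taylorTransform_zero h0]
    norm_num
  have hne : squareTransform ν 0 ≠ 0 := (squareTransform_pos (interior_subset h20)).ne'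
  unfold meanVarianceRatio
  rw [deriv_fun_div ((analyticAt_taylorTransform h0).differentiableAt.const_add μ)
    (analyticAt_squareTransform h20).differentiableAt hne, deriv_const_add, hN,
    deriv_squareTransform_zero h0, ← squareTransform_zero h0]
  field_simp

lemma iteratedDeriv_two_meanVarianceRatio_zero [NeZero ν]
    (h0 : 0 ∈ interior (integrableExpSet id ν)) :
    iteratedDeriv 2 (meanVarianceRatio μ ν) 0 =
      (moment id 1 ν / moment id 0 ν) ^ 2 * (2 * meanVarianceRatio μ ν 0 - 1 / 3) +
        1 / 6 * (moment id 2 ν / moment id 0 ν) * (1 / 2 - 7 * meanVarianceRatio μ ν 0) := by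
  have h20 : 2 * 0 ∈ interior (integrableExpSet id ν) := by simpa
  have hN : iteratedDeriv 2 (taylorTransform ν) 0 = moment id 2 ν / 12 := by
    rw [iteratedDeriv_taylorTransform_zero h0]
    norm_num
  have hD : iteratedDeriv 2 (squareTransform ν) 0 = 7 / 6 * moment id 2 ν := by
    rw [iteratedDeriv_squareTransform_zero h0]
    norm_num
  have leibniz := iteratedDeriv_two_div (f := fun s ↦ μ + taylorTransform ν s)
    (contDiffAt_const.add (analyticAt_taylorTransform h0).contDiffAt)
    (analyticAt_squareTransform h20).contDiffAt (squareTransform_pos (interior_subset h20)).ne'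
  rw [iteratedDeriv_const_add two_pos, hN, hD, deriv_squareTransform_zero h0,
    squareTransform_zero h0] at leibniz
  have slope := deriv_meanVarianceRatio_zero μ h0
  unfold meanVarianceRatio at slope ⊢
  rw [leibniz, slope, squareTransform_zero h0]
  ring

end MeanVarianceRatio

section Kolmogorov

variable {μ c : ℝ} {K : Measure ℝ} {s : ℝ}

/-- The Kolmogorov canonical measure `c δ₀ + x² K(dx)` of the Lévy–Khintchine data `(c, K)`.
A negative `c` counts as `0`. -/
noncomputable def kolmogorovMeasure (c : ℝ) (K : Measure ℝ) : Measure ℝ :=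
  ENNReal.ofReal c • Measure.dirac 0 + K.withDensity fun x ↦ ENNReal.ofReal (x ^ 2)

lemma integrable_withDensity_sq_iff {f : ℝ → ℝ} :
    Integrable f (K.withDensity fun x ↦ ENNReal.ofReal (x ^ 2)) ↔
      Integrable (fun x ↦ x ^ 2 * f x) K := by
  rw [integrable_withDensity_iff_integrable_smul' (by fun_prop) (by simp)]
  simp only [smul_eq_mul, ENNReal.toReal_ofReal (sq_nonneg _)]

lemma integrable_kolmogorovMeasure_iff {f : ℝ → ℝ} :
    Integrable f (kolmogorovMeasure c K) ↔ Integrable (fun x ↦ x ^ 2 * f x) K := by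
  rw [kolmogorovMeasure, integrable_add_measure, integrable_withDensity_sq_iff]
  exact and_iff_right ((integrable_dirac enorm_lt_top).smul_measure ENNReal.ofReal_ne_top)

lemma integral_kolmogorovMeasure (hc : 0 ≤ c) {f : ℝ → ℝ}
    (hf : Integrable f (kolmogorovMeasure c K)) :
    ∫ x, f x ∂kolmogorovMeasure c K = c * f 0 + ∫ x, x ^ 2 * f x ∂K := by
  rw [kolmogorovMeasure, integrable_add_measure] at hf
  rw [kolmogorovMeasure, integral_add_measure hf.1 hf.2, integral_smul_measure, integral_dirac,
    integral_withDensity_eq_integral_toReal_smul (by fun_prop) (by simp),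
    ENNReal.toReal_ofReal hc, smul_eq_mul]
  simp only [smul_eq_mul, ENNReal.toReal_ofReal (sq_nonneg _)]

lemma integrable_sq_mul_exp (hK : Integrable (fun x ↦ min 1 (x ^ 2)) K)
    (hs : s ∈ interior (integrableExpSet id (K.restrict {x | 1 ≤ |x|}))) :
    Integrable (fun x ↦ x ^ 2 * Real.exp (s * x)) K := by
  have hmeas : MeasurableSet {x : ℝ | 1 ≤ |x|} := measurableSet_le measurable_const (by fun_prop)
  have large : IntegrableOn (fun x ↦ x ^ 2 * Real.exp (s * x)) {x | 1 ≤ |x|} K := by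
    simpa [IntegrableOn] using integrable_pow_abs_mul_exp_of_mem_interior_integrableExpSet hs 2
  have small : IntegrableOn (fun x ↦ x ^ 2 * Real.exp (s * x)) {x | 1 ≤ |x|}ᶜ K := by
    refine (hK.mul_const (Real.exp |s|)).integrableOn.mono'
      (by fun_prop : Continuous _).aestronglyMeasurable ?_
    refine (ae_restrict_iff' hmeas.compl).2 (.of_forall fun x hx ↦ ?_)
    have hx' : |x| ≤ 1 := (not_le.1 (notMem_ofPred_iff.1 hx)).le
    have hsx : s * x ≤ |s| := calc
      s * x ≤ |s| * |x| := (le_abs_self _).trans_eq (abs_mul s x)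
      _ ≤ |s| := mul_le_of_le_one_right (abs_nonneg s) hx'
    rw [Real.norm_of_nonneg (by positivity), min_eq_right ((sq_le_one_iff_abs_le_one x).2 hx')]
    gcongr
  simpa using large.union small

lemma interior_integrableExpSet_restrict_subset (hK : Integrable (fun x ↦ min 1 (x ^ 2)) K) :
    interior (integrableExpSet id (K.restrict {x | 1 ≤ |x|})) ⊆
      interior (integrableExpSet id (kolmogorovMeasure c K)) :=
  interior_maximal
    (fun _ hs ↦ integrable_kolmogorovMeasure_iff.2 (integrable_sq_mul_exp hK hs)) isOpen_interior

lemma Ioo_subset_interior_integrableExpSet_kolmogorovMeasure {a b : ℝ}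
    (hKmin : ∫⁻ x, ENNReal.ofReal (min 1 (x ^ 2)) ∂K ≠ ⊤)
    (hKexp : ∀ s ∈ Ioo a b, ∫⁻ x in {x | 1 ≤ |x|}, ENNReal.ofReal (Real.exp (s * x)) ∂K ≠ ⊤) :
    Ioo a b ⊆ interior (integrableExpSet id (kolmogorovMeasure c K)) := by
  have hmin : Integrable (fun x ↦ min 1 (x ^ 2)) K :=
    (lintegral_ofReal_ne_top_iff_integrable (by fun_prop : Continuous _).aestronglyMeasurable
      (.of_forall fun x ↦ by positivity)).1 hKmin
  have htail : Ioo a b ⊆ integrableExpSet id (K.restrict {x | 1 ≤ |x|}) := fun s hs ↦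
    (lintegral_ofReal_ne_top_iff_integrable (by fun_prop : Continuous _).aestronglyMeasurable
      (.of_forall fun x ↦ by positivity)).1 (hKexp s hs)
  exact (interior_maximal htail isOpen_Ioo).trans (interior_integrableExpSet_restrict_subset hmin)

lemma moment_kolmogorovMeasure (hc : 0 ≤ c)
    (h0 : 0 ∈ interior (integrableExpSet id (kolmogorovMeasure c K))) (n : ℕ) :
    moment id n (kolmogorovMeasure c K) = c * 0 ^ n + ∫ x, x ^ (n + 2) ∂K := by
  simp only [moment, Pi.pow_apply]
  rw [integral_kolmogorovMeasure hc (integrable_pow_of_mem_interior_integrableExpSet h0 n)]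
  simp only [id, pow_add, mul_comm]

variable [IsFiniteMeasure (kolmogorovMeasure c K)]

lemma sq_mul_taylorTransform_kolmogorovMeasure (hc : 0 ≤ c)
    (hs : s ∈ integrableExpSet id (kolmogorovMeasure c K)) :
    s ^ 2 * taylorTransform (kolmogorovMeasure c K) s =
      c / 2 * s ^ 2 + ∫ x, (Real.exp (s * x) - 1 - s * x) ∂K := by
  rw [taylorTransform_eq_integral hs,
    integral_kolmogorovMeasure hc (integrable_mgf_taylorWeight_mul hs), mul_zero,
    mgf_taylorWeight_zero, mul_add, ← integral_const_mul]
  simp only [← mul_assoc, ← mul_pow, sq_mul_mgf_taylorWeight]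
  ring

lemma kappa_ofReal (hc : 0 ≤ c) {lam z : ℝ}
    (h0 : 0 ∈ interior (integrableExpSet id (kolmogorovMeasure c K)))
    (hz : lam * z ∈ integrableExpSet id (kolmogorovMeasure c K)) :
    kappa μ c K lam z =
      ((μ * z + z ^ 2 * taylorTransform (kolmogorovMeasure c K) (lam * z) : ℝ) : ℂ) := by
  rcases eq_or_ne lam 0 with rfl | hlam
  · have hN := iteratedDeriv_taylorTransform_zero h0 0
    rw [iteratedDeriv_zero, moment_kolmogorovMeasure hc h0] at hN
    rw [kappa, if_pos rfl, zero_mul, hN]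
    push_cast
    ring
  · have hN := sq_mul_taylorTransform_kolmogorovMeasure hc hz
    have hint : ∫ x : ℝ, (Complex.exp (lam * z * x) - 1 - lam * z * x) ∂K =
        ((∫ x, (Real.exp (lam * z * x) - 1 - lam * z * x) ∂K : ℝ) : ℂ) := by
      rw [← integral_complex_ofReal]
      push_cast
      rfl
    have hlam' : (lam : ℂ) ≠ 0 := ofReal_ne_zero.2 hlam
    rw [kappa, if_neg hlam, hint, eq_sub_of_add_eq' hN.symm]
    push_cast
    field_simp
    ring

lemma LamMV_eq_meanVarianceRatio (hc : 0 ≤ c) {lam : ℝ}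
    (h0 : 0 ∈ interior (integrableExpSet id (kolmogorovMeasure c K)))
    (h1 : lam ∈ integrableExpSet id (kolmogorovMeasure c K))
    (h2 : 2 * lam ∈ integrableExpSet id (kolmogorovMeasure c K)) :
    LamMV μ c K lam = (meanVarianceRatio μ (kolmogorovMeasure c K) lam : ℂ) := by
  have k1 := kappa_ofReal (μ := μ) (lam := lam) (z := 1) hc h0 (by rwa [mul_one])
  have k2 := kappa_ofReal (μ := μ) (lam := lam) (z := 2) hc h0 (by rwa [mul_comm lam])
  rw [ofReal_one] at k1
  rw [ofReal_ofNat, mul_comm lam (2 : ℝ)] at k2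
  rw [LamMV, k1, k2, meanVarianceRatio, squareTransform_eq h1 h2]
  push_cast
  ring_nf

lemma eqOn_LamMV_meanVarianceRatio (hc : 0 ≤ c)
    (h : Icc 0 2 ⊆ interior (integrableExpSet id (kolmogorovMeasure c K))) :
    EqOn (LamMV μ c K) (fun lam ↦ (meanVarianceRatio μ (kolmogorovMeasure c K) lam : ℂ))
      (Icc 0 1) := fun _ hlam ↦
  LamMV_eq_meanVarianceRatio hc (h (by simp))
    (interior_subset (h ⟨hlam.1, by linarith [hlam.2]⟩))
    (interior_subset (h ⟨by linarith [hlam.1], by linarith [hlam.2]⟩))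

variable [NeZero (kolmogorovMeasure c K)]

lemma iteratedDerivWithin_LamMV_zero (hc : 0 ≤ c)
    (h : Icc 0 2 ⊆ interior (integrableExpSet id (kolmogorovMeasure c K))) (n : ℕ) :
    iteratedDerivWithin n (LamMV μ c K) (Icc 0 1) 0 =
      ((iteratedDeriv n (meanVarianceRatio μ (kolmogorovMeasure c K)) 0 : ℝ) : ℂ) := by
  have hzero : (0 : ℝ) ∈ Icc 0 1 := ⟨le_rfl, zero_le_one⟩
  have hsmooth : ContDiffAt ℝ n (meanVarianceRatio μ (kolmogorovMeasure c K)) 0 :=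
    (analyticOnNhd_meanVarianceRatio μ h 0 hzero).contDiffAt
  have hunique := uniqueDiffOn_Icc (zero_lt_one (α := ℝ))
  rw [iteratedDerivWithin_congr (eqOn_LamMV_meanVarianceRatio hc h) hzero,
    iteratedDerivWithin_ofReal_comp hsmooth.contDiffWithinAt hunique hzero,
    iteratedDerivWithin_eq_iteratedDeriv hunique hsmooth hzero]

lemma contDiffOn_LamMV (hc : 0 ≤ c)
    (h : Icc 0 2 ⊆ interior (integrableExpSet id (kolmogorovMeasure c K))) {n : WithTop ℕ∞} :
    ContDiffOn ℝ n (LamMV μ c K) (Icc 0 1) :=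
  (ofRealCLM.contDiff.comp_contDiffOn
    ((analyticOnNhd_meanVarianceRatio μ h).contDiffOn (uniqueDiffOn_Icc zero_lt_one))).congr
    (eqOn_LamMV_meanVarianceRatio hc h)

end Kolmogorov

/-- second-order expansion of the mean-variance ratio `Λ`
(Lemma `approxTau`). -/
theorem mean_variance_ratio_expansion
    (μ c : ℝ) (hc : 0 ≤ c) (K : MeasureTheory.Measure ℝ)
    (hK0 : K {0} = 0)
    (hKmin : ∫⁻ x : ℝ, ENNReal.ofReal (min 1 (x ^ 2)) ∂K ≠ ⊤)
    (R : ℝ) (hR : R ≠ 0) (a b : ℝ)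
    (h0 : (0 : ℝ) ∈ Set.Ioo a b) (h2 : (2 : ℝ) ∈ Set.Ioo a b)
    (h2R : 2 * R ∈ Set.Ioo a b)
    (hK5 : ∫⁻ x in {x : ℝ | 1 ≤ |x|}, ENNReal.ofReal (|x| ^ 5) ∂K ≠ ⊤)
    (hKexp : ∀ s ∈ Set.Ioo a b,
      ∫⁻ x in {x : ℝ | 1 ≤ |x|}, ENNReal.ofReal (Real.exp (s * x)) ∂K ≠ ⊤)
    (σ2 : ℝ) (hσ2 : σ2 = c + ∫ x : ℝ, x ^ 2 ∂K) (hσ2pos : 0 < σ2)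
    (σ m s3 s4 : ℝ) (hσ : σ = Real.sqrt σ2) (hm : m = (μ + σ2 / 2) / σ2)
    (hs3 : s3 = (∫ x : ℝ, x ^ 3 ∂K) / σ ^ 3) (hs4 : s4 = (∫ x : ℝ, x ^ 4 ∂K) / σ ^ 4)
    :
    ContDiffOn ℝ 2 (LamMV μ c K) (Set.Icc 0 1) ∧
    LamMV μ c K 0 = (m : ℂ) ∧
    iteratedDerivWithin 1 (LamMV μ c K) (Set.Icc 0 1) 0 =
      (s3 : ℂ) * (σ : ℂ) * (1 / 6 - (m : ℂ)) ∧
    iteratedDerivWithin 2 (LamMV μ c K) (Set.Icc 0 1) 0 =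
      (s3 : ℂ) ^ 2 * (σ : ℂ) ^ 2 * (2 * (m : ℂ) - 1 / 3) +
        (1 / 6 : ℂ) * (s4 : ℂ) * (σ : ℂ) ^ 2 * (1 / 2 - 7 * (m : ℂ)) := by
  have hIcc : Icc 0 2 ⊆ interior (integrableExpSet id (kolmogorovMeasure c K)) :=
    (Icc_subset_Ioo h0.1 h2.2).trans
      (Ioo_subset_interior_integrableExpSet_kolmogorovMeasure hKmin hKexp)
  have hzero := hIcc (left_mem_Icc.2 zero_le_two)
  have := isFiniteMeasure_of_zero_mem_integrableExpSet (interior_subset hzero)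
  have hM := moment_kolmogorovMeasure hc hzero
  have hM₀ : moment id 0 (kolmogorovMeasure c K) = σ2 := by simp [hM, hσ2]
  have : NeZero (kolmogorovMeasure c K) := ⟨fun h ↦ hσ2pos.ne (by simpa [h, moment] using hM₀)⟩
  have hσpos : 0 < σ := hσ ▸ Real.sqrt_pos.2 hσ2pos
  have hσsq : σ2 = σ ^ 2 := by rw [hσ, Real.sq_sqrt hσ2pos.le]
  have hM₁ : moment id 1 (kolmogorovMeasure c K) / σ2 = s3 * σ := by
    rw [hM, hs3, hσsq, zero_pow one_ne_zero, mul_zero, zero_add]; field_simp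
  have hM₂ : moment id 2 (kolmogorovMeasure c K) / σ2 = s4 * σ ^ 2 := by
    rw [hM, hs4, hσsq, zero_pow two_ne_zero, mul_zero, zero_add]; field_simp
  have value : meanVarianceRatio μ (kolmogorovMeasure c K) 0 = m := by
    rw [meanVarianceRatio_zero μ hzero, hM₀, hm]
  refine ⟨contDiffOn_LamMV hc hIcc, ?_, ?_, ?_⟩
  · rw [← value, eqOn_LamMV_meanVarianceRatio hc hIcc (left_mem_Icc.2 zero_le_one)]
  · rw [iteratedDerivWithin_LamMV_zero hc hIcc, iteratedDeriv_one,
      deriv_meanVarianceRatio_zero μ hzero, hM₀, hM₁, value]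
    push_cast; rfl
  · rw [iteratedDerivWithin_LamMV_zero hc hIcc, iteratedDeriv_two_meanVarianceRatio_zero μ hzero,
      hM₀, hM₁, hM₂, value]
    push_cast; ring
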